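/- arXiv:2005.13748 — 2 statements merged into one kernel-verified Lean document; each statement's English description precedes it below -/
import Mathlib

section
/- Let γ ∈ (0, 1) and let φ : ℝ → ℝ be a margin-based loss with φ(α) ≥ 0 for all α. Assume φ is bounded, nonincreasing, quasiconcave even, and φ(−1) > φ(1), and set B := φ(1) + φ(−1). Then φ is (φ_γ, [−1, 1])-calibrated if and only if φ(γ) + φ(−γ) > B. -/
/-- Class-conditional risk of a margin-based loss `φ`:
`C_φ(α, η) = η φ(α) + (1 - η) φ(-α)`. -/
noncomputable def ccr (φ : ℝ → ℝ) (α η : ℝ) : ℝ := η * φ α + (1 - η) * φ (-α)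

/-- Minimal class-conditional risk over a set `A` of achievable prediction values. -/
noncomputable def ccrStar (φ : ℝ → ℝ) (A : Set ℝ) (η : ℝ) : ℝ :=
  sInf ((fun α => ccr φ α η) '' A)

/-- Excess class-conditional risk. -/
noncomputable def ccrExcess (φ : ℝ → ℝ) (A : Set ℝ) (α η : ℝ) : ℝ :=
  ccr φ α η - ccrStar φ A η

/-- `φ` is `(ψ, A)`-calibrated. -/
def Calibrated (φ ψ : ℝ → ℝ) (A : Set ℝ) : Prop :=
  ∀ ε > (0:ℝ), ∃ δ > (0:ℝ), ∀ η ∈ Set.Icc (0:ℝ) 1, ∀ α ∈ A,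
    ccr φ α η < ccrStar φ A η + δ → ccr ψ α η < ccrStar ψ A η + ε

/-- The `γ`-robust 0-1 loss `φ_γ(α) = 1{α ≤ γ}` (the 0-1 loss is the case `γ = 0`). -/
noncomputable def robustLoss (γ : ℝ) (α : ℝ) : ℝ := if α ≤ γ then 1 else 0

/-- Quasiconcavity of a real function on ℝ. -/
def QuasiconcaveFn (h : ℝ → ℝ) : Prop :=
  ∀ α₁ α₂ l : ℝ, 0 ≤ l → l ≤ 1 → min (h α₁) (h α₂) ≤ h (l * α₁ + (1 - l) * α₂)

/-- `φ` is quasiconcave even if its even part `α ↦ φ(α) + φ(-α)` is quasiconcave. -/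
def QuasiconcaveEven (φ : ℝ → ℝ) : Prop := QuasiconcaveFn (fun α => φ α + φ (-α))

/-!
For `t = 2η - 1` the risk splits into an even and an odd part,
`2 C_φ(α, η) = (φ(α) + φ(-α)) - t (φ(-α) - φ(α))`. On `[-b, b]` quasiconcavity makes the even part
smallest at `±b` and monotonicity makes the odd part largest in absolute value there, so the minimal
risk is attained at `b` or at `-b`, and the excess risk is explicit. It dominates `c` times the
excess risk of `φ_γ`, where `2c = φ(γ) + φ(-γ) - (φ(b) + φ(-b))`; this gives calibration when
`c > 0`. When `c ≤ 0`, the margin `γ` is optimal for `φ` at `η = 1/2` but not for `φ_γ`.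
-/

theorem QuasiconcaveFn.quasiconcaveOn {h : ℝ → ℝ} (hh : QuasiconcaveFn h) {s : Set ℝ}
    (hs : Convex ℝ s) : QuasiconcaveOn ℝ s h := by
  refine quasiconcaveOn_iff_min_le.mpr ⟨hs, fun x _ y _ l m hl hm hlm => ?_⟩
  obtain rfl : m = 1 - l := by linarith
  exact hh x y l hl (by linarith)

theorem le_of_quasiconcaveOn_of_even_of_abs_le {𝕜 β : Type*} [Field 𝕜] [LinearOrder 𝕜]
    [IsStrictOrderedRing 𝕜] [Preorder β] {s : Set 𝕜} {f : 𝕜 → β} (hf : QuasiconcaveOn 𝕜 s f)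
    (heven : Function.Even f) {x y : 𝕜} (hx : x ∈ s) (hnx : -x ∈ s) (hyx : |y| ≤ |x|) :
    f x ≤ f y := by
  have hy : y ∈ segment 𝕜 x (-x) := by
    rw [segment_eq_uIcc, Set.mem_uIcc]
    rcases abs_cases x with ⟨hx', -⟩ | ⟨hx', -⟩ <;> rw [hx', abs_le] at hyx
    · exact Or.inr hyx
    · exact Or.inl (by simpa using hyx)
  exact ((hf (f x)).segment_subset ⟨hx, le_rfl⟩ ⟨hnx, (heven x).ge⟩ hy).2

theorem add_map_neg_le_of_quasiconcaveOn_of_abs_le {φ : ℝ → ℝ} {b : ℝ}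
    (hqcc : QuasiconcaveOn ℝ (Set.Icc (-b) b) fun α => φ α + φ (-α)) {x y : ℝ}
    (hx : x ∈ Set.Icc (-b) b) (hyx : |y| ≤ |x|) : φ x + φ (-x) ≤ φ y + φ (-y) :=
  le_of_quasiconcaveOn_of_even_of_abs_le hqcc (fun α => by simp only [neg_neg, add_comm]) hx
    ⟨neg_le_neg hx.2, neg_le.mp hx.1⟩ hyx

theorem add_map_neg_le_of_quasiconcaveOn_of_mem_Icc {φ : ℝ → ℝ} {b : ℝ}
    (hqcc : QuasiconcaveOn ℝ (Set.Icc (-b) b) fun α => φ α + φ (-α)) (x : ℝ)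
    (hx : x ∈ Set.Icc (-b) b) : φ b + φ (-b) ≤ φ x + φ (-x) :=
  add_map_neg_le_of_quasiconcaveOn_of_abs_le hqcc (Set.right_mem_Icc.mpr (hx.1.trans hx.2))
    ((abs_le.mpr hx).trans (le_abs_self b))

theorem abs_map_neg_sub_le_of_antitoneOn {φ : ℝ → ℝ} {b α : ℝ}
    (hφ : AntitoneOn φ (Set.Icc (-b) b)) (hα : α ∈ Set.Icc (-b) b) :
    |φ (-α) - φ α| ≤ φ (-b) - φ b := by
  have hnα : -α ∈ Set.Icc (-b) b := ⟨neg_le_neg hα.2, neg_le.mp hα.1⟩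
  exact Real.dist_le_of_mem_Icc (hφ.mapsTo_Icc hnα) (hφ.mapsTo_Icc hα)

theorem mul_map_neg_sub_le_abs_mul_of_antitoneOn {φ : ℝ → ℝ} {b α : ℝ}
    (hφ : AntitoneOn φ (Set.Icc (-b) b)) (hα : α ∈ Set.Icc (-b) b) (t : ℝ) :
    t * (φ (-α) - φ α) ≤ |t| * (φ (-b) - φ b) :=
  calc t * (φ (-α) - φ α) ≤ |t| * |φ (-α) - φ α| := (le_abs_self _).trans_eq (abs_mul _ _)
    _ ≤ |t| * (φ (-b) - φ b) := by
        gcongr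
        exact abs_map_neg_sub_le_of_antitoneOn hφ hα

section Calibration

variable {φ ψ : ℝ → ℝ} {A : Set ℝ}

theorem calibrated_of_mul_ccrExcess_le {c : ℝ} (hc : 0 < c)
    (h : ∀ η ∈ Set.Icc (0 : ℝ) 1, ∀ α ∈ A, c * ccrExcess ψ A α η ≤ ccrExcess φ A α η) :
    Calibrated φ ψ A := by
  refine fun ε hε => ⟨c * ε, mul_pos hc hε, fun η hη α hα hrisk => ?_⟩
  have hlt : c * ccrExcess ψ A α η < c * ε := (h η hη α hα).trans_lt (sub_lt_iff_lt_add'.mpr hrisk)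
  exact sub_lt_iff_lt_add'.mp (lt_of_mul_lt_mul_left hlt hc.le)

theorem Calibrated.ccrExcess_nonpos (h : Calibrated φ ψ A) {α η : ℝ} (hη : η ∈ Set.Icc (0 : ℝ) 1)
    (hα : α ∈ A) (hrisk : ccrExcess φ A α η ≤ 0) : ccrExcess ψ A α η ≤ 0 := by
  refine le_of_forall_pos_lt_add fun ε hε => ?_
  obtain ⟨δ, hδ, hcal⟩ := h ε hε
  rw [zero_add]
  exact sub_lt_iff_lt_add'.mpr
    (hcal η hη α hα (sub_lt_iff_lt_add'.mp (hrisk.trans_lt hδ)))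

end Calibration

section Risk

variable {φ : ℝ → ℝ} {b : ℝ}

theorem ccr_eq_even_sub_odd (φ : ℝ → ℝ) (α η : ℝ) :
    ccr φ α η = (φ α + φ (-α) - (2 * η - 1) * (φ (-α) - φ α)) / 2 := by
  unfold ccr
  ring

theorem ccr_neg_one_sub (φ : ℝ → ℝ) (α η : ℝ) : ccr φ (-α) (1 - η) = ccr φ α η := by
  simp only [ccr, neg_neg]
  ring

open scoped Pointwise in
theorem ccrExcess_neg_one_sub (φ : ℝ → ℝ) {A : Set ℝ} (hA : -A = A) (α η : ℝ) :
    ccrExcess φ A (-α) (1 - η) = ccrExcess φ A α η := by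
  have hstar : ccrStar φ A (1 - η) = ccrStar φ A η := by
    unfold ccrStar
    conv_lhs => rw [← hA, ← Set.image_neg_eq_neg, Set.image_image]
    simp only [ccr_neg_one_sub]
  rw [ccrExcess, ccrExcess, ccr_neg_one_sub, hstar]

theorem isLeast_ccr_image_Icc (hb : 0 ≤ b) (hφ : AntitoneOn φ (Set.Icc (-b) b))
    (hmin : ∀ α ∈ Set.Icc (-b) b, φ b + φ (-b) ≤ φ α + φ (-α)) (η : ℝ) :
    IsLeast ((fun α => ccr φ α η) '' Set.Icc (-b) b)
      ((φ b + φ (-b) - |2 * η - 1| * (φ (-b) - φ b)) / 2) := by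
  have hbb : -b ≤ b := neg_le_self hb
  constructor
  · rcases abs_cases (2 * η - 1) with ⟨ht, -⟩ | ⟨ht, -⟩ <;> rw [ht]
    · exact ⟨b, Set.right_mem_Icc.mpr hbb, ccr_eq_even_sub_odd φ b η⟩
    · refine ⟨-b, Set.left_mem_Icc.mpr hbb, ?_⟩
      simp only [ccr_eq_even_sub_odd, neg_neg]
      ring
  · rintro _ ⟨α, hα, rfl⟩
    simp only [ccr_eq_even_sub_odd]
    linarith [hmin α hα, mul_map_neg_sub_le_abs_mul_of_antitoneOn hφ hα (2 * η - 1)]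

theorem ccrStar_Icc (hb : 0 ≤ b) (hφ : AntitoneOn φ (Set.Icc (-b) b))
    (hmin : ∀ α ∈ Set.Icc (-b) b, φ b + φ (-b) ≤ φ α + φ (-α)) (η : ℝ) :
    ccrStar φ (Set.Icc (-b) b) η = (φ b + φ (-b) - |2 * η - 1| * (φ (-b) - φ b)) / 2 :=
  (isLeast_ccr_image_Icc hb hφ hmin η).csInf_eq

theorem ccrExcess_Icc (hb : 0 ≤ b) (hφ : AntitoneOn φ (Set.Icc (-b) b))
    (hmin : ∀ α ∈ Set.Icc (-b) b, φ b + φ (-b) ≤ φ α + φ (-α)) (α η : ℝ) :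
    ccrExcess φ (Set.Icc (-b) b) α η =
      ((φ α + φ (-α) - (φ b + φ (-b))) +
        (|2 * η - 1| * (φ (-b) - φ b) - (2 * η - 1) * (φ (-α) - φ α))) / 2 := by
  rw [ccrExcess, ccr_eq_even_sub_odd, ccrStar_Icc hb hφ hmin]
  ring

end Risk

section RobustLoss

variable {γ b α : ℝ}

theorem robustLoss_of_le (h : α ≤ γ) : robustLoss γ α = 1 := if_pos h

theorem robustLoss_of_lt (h : γ < α) : robustLoss γ α = 0 := if_neg h.not_ge

theorem robustLoss_antitone (γ : ℝ) : Antitone (robustLoss γ) := by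
  intro x y hxy
  unfold robustLoss
  split_ifs <;> linarith

theorem one_le_robustLoss_add_neg (hγ : 0 ≤ γ) (α : ℝ) :
    1 ≤ robustLoss γ α + robustLoss γ (-α) := by
  unfold robustLoss
  split_ifs <;> linarith

theorem ccrStar_robustLoss_Icc (hγ : γ ∈ Set.Ico 0 b) (η : ℝ) :
    ccrStar (robustLoss γ) (Set.Icc (-b) b) η = (1 - |2 * η - 1|) / 2 := by
  have hpos : robustLoss γ b = 0 := robustLoss_of_lt hγ.2
  have hneg : robustLoss γ (-b) = 1 := robustLoss_of_le (by linarith [hγ.1, hγ.2])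
  have hmin : ∀ α ∈ Set.Icc (-b) b,
      robustLoss γ b + robustLoss γ (-b) ≤ robustLoss γ α + robustLoss γ (-α) := fun α _ => by
    simpa only [hpos, hneg, zero_add] using one_le_robustLoss_add_neg hγ.1 α
  rw [ccrStar_Icc (hγ.1.trans hγ.2.le) ((robustLoss_antitone γ).antitoneOn _) hmin, hpos, hneg]
  ring

theorem ccrExcess_robustLoss_of_abs_le (hγ : γ ∈ Set.Ico 0 b) (hα : |α| ≤ γ) (η : ℝ) :
    ccrExcess (robustLoss γ) (Set.Icc (-b) b) α η = (1 + |2 * η - 1|) / 2 := by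
  rw [ccrExcess, ccrStar_robustLoss_Icc hγ, ccr, robustLoss_of_le (abs_le'.mp hα).1,
    robustLoss_of_le (abs_le'.mp hα).2]
  ring

theorem ccrExcess_robustLoss_of_lt (hγ : γ ∈ Set.Ico 0 b) (hα : γ < α) (η : ℝ) :
    ccrExcess (robustLoss γ) (Set.Icc (-b) b) α η = (|2 * η - 1| - (2 * η - 1)) / 2 := by
  rw [ccrExcess, ccrStar_robustLoss_Icc hγ, ccr, robustLoss_of_lt hα,
    robustLoss_of_le (by linarith [hγ.1])]
  ring

end RobustLoss

section CalibrationBound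

variable {φ : ℝ → ℝ} {γ b α η : ℝ}

theorem mul_ccrExcess_robustLoss_le_of_abs_le (hγ : γ ∈ Set.Ico 0 b)
    (hφ : AntitoneOn φ (Set.Icc (-b) b))
    (hqcc : QuasiconcaveOn ℝ (Set.Icc (-b) b) fun α => φ α + φ (-α))
    (hη : η ∈ Set.Icc (0 : ℝ) 1) (hα : |α| ≤ γ) :
    (φ γ + φ (-γ) - (φ b + φ (-b))) / 2 * ccrExcess (robustLoss γ) (Set.Icc (-b) b) α η ≤
      ccrExcess φ (Set.Icc (-b) b) α η := by
  have hb : 0 ≤ b := hγ.1.trans hγ.2.le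
  have hγb : γ ∈ Set.Icc (-b) b := ⟨by linarith [hγ.1], hγ.2.le⟩
  have hαb : α ∈ Set.Icc (-b) b := abs_le.mp (hα.trans hγ.2.le)
  have hmin := add_map_neg_le_of_quasiconcaveOn_of_mem_Icc hqcc
  have heven : φ γ + φ (-γ) ≤ φ α + φ (-α) :=
    add_map_neg_le_of_quasiconcaveOn_of_abs_le hqcc hγb (by rwa [abs_of_nonneg hγ.1])
  have hodd := mul_map_neg_sub_le_abs_mul_of_antitoneOn hφ hαb (2 * η - 1)
  have hle_one : ccrExcess (robustLoss γ) (Set.Icc (-b) b) α η ≤ 1 := by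
    have ht : |2 * η - 1| ≤ 1 := abs_le.mpr ⟨by linarith [hη.1], by linarith [hη.2]⟩
    rw [ccrExcess_robustLoss_of_abs_le hγ hα]
    linarith
  calc (φ γ + φ (-γ) - (φ b + φ (-b))) / 2 * ccrExcess (robustLoss γ) (Set.Icc (-b) b) α η
      ≤ (φ γ + φ (-γ) - (φ b + φ (-b))) / 2 :=
        mul_le_of_le_one_right (by linarith [hmin γ hγb]) hle_one
    _ ≤ ccrExcess φ (Set.Icc (-b) b) α η := by
        rw [ccrExcess_Icc hb hφ hmin]
        linarith

theorem mul_ccrExcess_robustLoss_le_of_lt (hγ : γ ∈ Set.Ico 0 b)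
    (hφ : AntitoneOn φ (Set.Icc (-b) b))
    (hqcc : QuasiconcaveOn ℝ (Set.Icc (-b) b) fun α => φ α + φ (-α))
    (hγα : γ < α) (hαb : α ≤ b) :
    (φ γ + φ (-γ) - (φ b + φ (-b))) / 2 * ccrExcess (robustLoss γ) (Set.Icc (-b) b) α η ≤
      ccrExcess φ (Set.Icc (-b) b) α η := by
  have ⟨hγ0, hγb⟩ := hγ
  have hα : α ∈ Set.Icc (-b) b := ⟨by linarith, hαb⟩
  have hmin := add_map_neg_le_of_quasiconcaveOn_of_mem_Icc hqcc
  have hgap : φ γ + φ (-γ) - (φ b + φ (-b)) ≤ φ (-b) - φ b := by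
    have hφγ : φ γ ≤ φ (-b) := (hφ.mapsTo_Icc ⟨by linarith, hγb.le⟩).2
    have hφnγ : φ (-γ) ≤ φ (-b) := (hφ.mapsTo_Icc ⟨by linarith, by linarith⟩).2
    linarith
  have hodd_nonneg : 0 ≤ φ (-α) - φ α :=
    sub_nonneg.mpr (hφ ⟨by linarith, by linarith⟩ hα (by linarith))
  have hodd_le : φ (-α) - φ α ≤ φ (-b) - φ b :=
    (le_abs_self _).trans (abs_map_neg_sub_le_of_antitoneOn hφ hα)
  rw [ccrExcess_robustLoss_of_lt hγ hγα, ccrExcess_Icc (hγ0.trans hγb.le) hφ hmin]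
  set t := 2 * η - 1
  have hneg : 0 ≤ (|t| - t) / 2 := by linarith [le_abs_self t]
  have hpos : 0 ≤ (|t| + t) / 2 := by linarith [neg_abs_le t]
  have hodd : (|t| - t) / 2 * (φ (-b) - φ b) ≤
      |t| * (φ (-b) - φ b) - t * (φ (-α) - φ α) :=
    calc (|t| - t) / 2 * (φ (-b) - φ b)
        ≤ (|t| - t) / 2 * (φ (-b) - φ b + (φ (-α) - φ α)) +
            (|t| + t) / 2 * (φ (-b) - φ b - (φ (-α) - φ α)) :=
          le_add_of_le_of_nonneg (by gcongr; linarith) (mul_nonneg hpos (by linarith))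
      _ = |t| * (φ (-b) - φ b) - t * (φ (-α) - φ α) := by ring
  linarith [hmin α hα, mul_le_mul_of_nonneg_left hgap hneg]

open scoped Pointwise in
theorem mul_ccrExcess_robustLoss_le (hγ : γ ∈ Set.Ico 0 b)
    (hφ : AntitoneOn φ (Set.Icc (-b) b))
    (hqcc : QuasiconcaveOn ℝ (Set.Icc (-b) b) fun α => φ α + φ (-α))
    (hη : η ∈ Set.Icc (0 : ℝ) 1) (hα : α ∈ Set.Icc (-b) b) :
    (φ γ + φ (-γ) - (φ b + φ (-b))) / 2 * ccrExcess (robustLoss γ) (Set.Icc (-b) b) α η ≤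
      ccrExcess φ (Set.Icc (-b) b) α η := by
  rcases le_or_gt |α| γ with hle | hlt
  · exact mul_ccrExcess_robustLoss_le_of_abs_le hγ hφ hqcc hη hle
  rcases lt_abs.mp hlt with hγα | hγα
  · exact mul_ccrExcess_robustLoss_le_of_lt hγ hφ hqcc hγα hα.2
  · have hreflect := mul_ccrExcess_robustLoss_le_of_lt (η := 1 - η) hγ hφ hqcc hγα
      (neg_le.mp hα.1)
    have hsymm : -Set.Icc (-b) b = Set.Icc (-b) b := by rw [Set.neg_Icc, neg_neg]
    simpa only [ccrExcess_neg_one_sub _ hsymm] using hreflect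

end CalibrationBound

theorem qcc_even_calibrated_robust_iff_general {γ b : ℝ} (hγ : γ ∈ Set.Ico 0 b) {φ : ℝ → ℝ}
    (hφ : AntitoneOn φ (Set.Icc (-b) b))
    (hqcc : QuasiconcaveOn ℝ (Set.Icc (-b) b) fun α => φ α + φ (-α)) :
    Calibrated φ (robustLoss γ) (Set.Icc (-b) b) ↔ φ b + φ (-b) < φ γ + φ (-γ) := by
  have ⟨hγ0, hγb⟩ := hγ
  constructor
  · intro hcal
    by_contra! hle
    have ht : 2 * (1 / 2 : ℝ) - 1 = 0 := by norm_num
    have hhalf : (1 / 2 : ℝ) ∈ Set.Icc (0 : ℝ) 1 := by norm_num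
    have hmin := add_map_neg_le_of_quasiconcaveOn_of_mem_Icc hqcc
    have hoptimal : ccrExcess φ (Set.Icc (-b) b) γ (1 / 2) ≤ 0 := by
      rw [ccrExcess_Icc (hγ0.trans hγb.le) hφ hmin, ht, abs_zero]
      linarith
    have hrobust := hcal.ccrExcess_nonpos hhalf ⟨by linarith, hγb.le⟩ hoptimal
    rw [ccrExcess_robustLoss_of_abs_le hγ (abs_of_nonneg hγ0).le, ht, abs_zero] at hrobust
    linarith
  · exact fun hlt => calibrated_of_mul_ccrExcess_le (half_pos (sub_pos.mpr hlt)) fun η hη α hα =>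
      mul_ccrExcess_robustLoss_le hγ hφ hqcc hη hα

/-- Theorem 2, part 2: a bounded, nonincreasing, quasiconcave even loss with
`φ(-1) > φ(1)` is `(φ_γ, [-1,1])`-calibrated iff `φ(γ) + φ(-γ) > φ(1) + φ(-1)`. -/
theorem qcc_even_calibrated_robust_iff
    (γ : ℝ) (hγ : γ ∈ Set.Ioo (0:ℝ) 1)
    (φ : ℝ → ℝ) (hφ : ∀ α, 0 ≤ φ α)
    (hbdd : ∃ M : ℝ, ∀ α, φ α ≤ M)
    (hmono : ∀ α₁ α₂ : ℝ, α₁ ≤ α₂ → φ α₂ ≤ φ α₁)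
    (hqcc : QuasiconcaveEven φ)
    (hgap : φ 1 < φ (-1)) :
    Calibrated φ (robustLoss γ) (Set.Icc (-1:ℝ) 1) ↔
      φ 1 + φ (-1) < φ γ + φ (-γ) :=
  qcc_even_calibrated_robust_iff_general ⟨hγ.1.le, hγ.2⟩ (fun x _ y _ hxy => hmono x y hxy)
    (hqcc.quasiconcaveOn (convex_Icc _ _))
end

section
/- Let γ ∈ (0, 1) and β ≥ 0, define the shifted hinge loss φ_β(α) := max{0, 1 − α + β}, and set A := [−1, 1]. For 0 < ε ≤ 1, define the calibration function value D(ε) := inf{ ΔC_{φ_β,A}(α, η) : η ∈ [0, 1], α ∈ A, ΔC_{φ_γ,A}(α, η) ≥ ε }. Then D(ε) = 0 for every ε with 0 < ε ≤ 1/2, and D(ε) = (1 − γ)(2ε − 1) for every ε with 1/2 < ε ≤ 1. In particular, φ_β is not (φ_γ, [−1, 1])-calibrated. -/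
/-!
Put `s = 2 * η - 1`. On `[-r, r]` with `r ≤ 1 + β` the hinge is not clipped, so the hinge risk is
affine in `α` with slope `-s` and its excess is `r * |s| - s * α`. The robust excess risk vanishes
as soon as the margin `α` exceeds `γ` in the direction of the sign of `s`, and it never exceeds
`(1 + |s|) / 2`. Hence a robust excess `ε > 0` forces both `s * α ≤ γ * |s|` and
`2 * ε - 1 ≤ |s|`, so the hinge excess is at least `(r - γ) * |s| ≥ (r - γ) * (2 * ε - 1)`. For
`ε ≥ 1 / 2` the margin `α = γ` at `η = ε` attains this bound, and calibration fails because the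
bound is zero at `ε = 1 / 2`.
-/

open Set

/-- The hinge loss shifted horizontally by `β`, written `φ_β` in the paper. -/
noncomputable def shiftedHinge (β α : ℝ) : ℝ := max 0 (1 - α + β)

/-- The `(ψ, A)`-calibration function of a surrogate `φ` at `ε`: the smallest excess `φ`-risk at
which an excess `ψ`-risk of at least `ε` is possible. As an infimum of reals it takes the value `0`
when no excess `ψ`-risk reaches `ε`. -/
noncomputable def calibrationFun (φ ψ : ℝ → ℝ) (A : Set ℝ) (ε : ℝ) : ℝ :=
  sInf {x | ∃ η ∈ Icc (0 : ℝ) 1, ∃ α ∈ A, ε ≤ ccrExcess ψ A α η ∧ x = ccrExcess φ A α η}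

theorem calibrationFun_pos {φ ψ : ℝ → ℝ} {A : Set ℝ} {ε : ℝ} (h : Calibrated φ ψ A) (hε : 0 < ε)
    (hne : ∃ η ∈ Icc (0 : ℝ) 1, ∃ α ∈ A, ε ≤ ccrExcess ψ A α η) :
    0 < calibrationFun φ ψ A ε := by
  obtain ⟨δ, hδ, hcal⟩ := h ε hε
  obtain ⟨η₀, hη₀, α₀, hα₀, h₀⟩ := hne
  refine hδ.trans_le (le_csInf ⟨_, η₀, hη₀, α₀, hα₀, h₀, rfl⟩ ?_)
  rintro _ ⟨η, hη, α, hα, hψ, rfl⟩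
  by_contra! hφ
  exact hψ.not_gt (sub_lt_iff_lt_add'.2 (hcal η hη α hα (sub_lt_iff_lt_add'.1 hφ)))

section ShiftedHinge

variable {α β r : ℝ}

theorem mul_le_mul_abs_of_mem_Icc (hα : α ∈ Icc (-r) r) (s : ℝ) : s * α ≤ r * |s| :=
  calc
    s * α ≤ |s| * |α| := (le_abs_self _).trans (abs_mul s α).le
    _ ≤ |s| * r := mul_le_mul_of_nonneg_left (abs_le.2 hα) (abs_nonneg s)
    _ = r * |s| := mul_comm _ _

theorem ccr_shiftedHinge (hα : |α| ≤ 1 + β) (η : ℝ) :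
    ccr (shiftedHinge β) α η = 1 + β - (2 * η - 1) * α := by
  obtain ⟨hα₁, hα₂⟩ := abs_le.1 hα
  rw [ccr, shiftedHinge, shiftedHinge, max_eq_right (by linarith), max_eq_right (by linarith)]
  ring

theorem ccrStar_shiftedHinge (hr₀ : 0 ≤ r) (hr : r ≤ 1 + β) (η : ℝ) :
    ccrStar (shiftedHinge β) (Icc (-r) r) η = 1 + β - r * |2 * η - 1| := by
  refine IsLeast.csInf_eq ⟨?_, ?_⟩
  · rcases le_total 0 (2 * η - 1) with hs | hs
    · refine ⟨r, ⟨by linarith, le_rfl⟩, (ccr_shiftedHinge (by rwa [abs_of_nonneg hr₀]) η).trans ?_⟩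
      rw [abs_of_nonneg hs]
      ring
    · refine ⟨-r, ⟨le_rfl, by linarith⟩,
        (ccr_shiftedHinge (by rwa [abs_neg, abs_of_nonneg hr₀]) η).trans ?_⟩
      rw [abs_of_nonpos hs]
      ring
  · rintro _ ⟨α, hα, rfl⟩
    calc
      1 + β - r * |2 * η - 1| ≤ 1 + β - (2 * η - 1) * α :=
        sub_le_sub_left (mul_le_mul_abs_of_mem_Icc hα _) _
      _ = ccr (shiftedHinge β) α η := (ccr_shiftedHinge ((abs_le.2 hα).trans hr) η).symm

theorem ccrExcess_shiftedHinge (hr : r ≤ 1 + β) (hα : α ∈ Icc (-r) r) (η : ℝ) :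
    ccrExcess (shiftedHinge β) (Icc (-r) r) α η = r * |2 * η - 1| - (2 * η - 1) * α := by
  have hr₀ : 0 ≤ r := (abs_nonneg α).trans (abs_le.2 hα)
  rw [ccrExcess, ccr_shiftedHinge ((abs_le.2 hα).trans hr), ccrStar_shiftedHinge hr₀ hr]
  ring

end ShiftedHinge

section RobustLoss

variable {γ α η : ℝ} {A : Set ℝ}

theorem ccr_robustLoss_of_abs_le (hα : |α| ≤ γ) (η : ℝ) : ccr (robustLoss γ) α η = 1 := by
  rw [ccr, robustLoss, robustLoss, if_pos (abs_le.1 hα).2, if_pos (neg_le.1 (abs_le.1 hα).1)]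
  ring

theorem ccr_robustLoss_of_lt (hγ : 0 ≤ γ) (hα : γ < α) (η : ℝ) :
    ccr (robustLoss γ) α η = 1 - η := by
  rw [ccr, robustLoss, robustLoss, if_neg hα.not_ge, if_pos (by linarith)]
  ring

theorem ccr_robustLoss_of_lt_neg (hγ : 0 ≤ γ) (hα : α < -γ) (η : ℝ) :
    ccr (robustLoss γ) α η = η := by
  rw [ccr, robustLoss, robustLoss, if_pos (by linarith), if_neg (by linarith)]
  ring

theorem min_le_ccr_robustLoss (hγ : 0 ≤ γ) (hη : η ≤ 1) (α : ℝ) :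
    min η (1 - η) ≤ ccr (robustLoss γ) α η := by
  rcases le_or_gt |α| γ with hα | hα
  · exact (min_le_left _ _).trans (hη.trans_eq (ccr_robustLoss_of_abs_le hα η).symm)
  · rcases lt_abs.1 hα with hα | hα
    · exact (min_le_right _ _).trans_eq (ccr_robustLoss_of_lt hγ hα η).symm
    · exact (min_le_left _ _).trans_eq (ccr_robustLoss_of_lt_neg hγ (lt_neg.1 hα) η).symm

theorem ccr_robustLoss_le_one (hη : η ∈ Icc (0 : ℝ) 1) : ccr (robustLoss γ) α η ≤ 1 := by
  have robustLoss_le_one (a : ℝ) : robustLoss γ a ≤ 1 := by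
    rw [robustLoss]
    split_ifs <;> norm_num
  calc
    ccr (robustLoss γ) α η ≤ η * 1 + (1 - η) * 1 :=
      add_le_add (mul_le_mul_of_nonneg_left (robustLoss_le_one α) hη.1)
        (mul_le_mul_of_nonneg_left (robustLoss_le_one (-α)) (sub_nonneg.2 hη.2))
    _ = 1 := by ring

theorem ccrStar_robustLoss (hγ : 0 ≤ γ)
    (hA : (A ∩ Ioi γ).Nonempty ∧ (A ∩ Iio (-γ)).Nonempty) (hη : η ≤ 1) :
    ccrStar (robustLoss γ) A η = min η (1 - η) := by
  refine IsLeast.csInf_eq ⟨?_, ?_⟩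
  · rcases min_choice η (1 - η) with hmin | hmin
    · obtain ⟨a, haA, ha⟩ := hA.2
      exact ⟨a, haA, (ccr_robustLoss_of_lt_neg hγ ha η).trans hmin.symm⟩
    · obtain ⟨a, haA, ha⟩ := hA.1
      exact ⟨a, haA, (ccr_robustLoss_of_lt hγ ha η).trans hmin.symm⟩
  · rintro _ ⟨α, -, rfl⟩
    exact min_le_ccr_robustLoss hγ hη α

theorem two_mul_ccrExcess_robustLoss_le (hγ : 0 ≤ γ)
    (hA : (A ∩ Ioi γ).Nonempty ∧ (A ∩ Iio (-γ)).Nonempty) (hη : η ∈ Icc (0 : ℝ) 1) :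
    2 * ccrExcess (robustLoss γ) A α η ≤ 1 + |2 * η - 1| := by
  have hmin : 1 - |2 * η - 1| ≤ 2 * min η (1 - η) := by
    rcases min_choice η (1 - η) with h | h <;> rw [h]
    · linarith [neg_le_abs (2 * η - 1)]
    · linarith [le_abs_self (2 * η - 1)]
  rw [ccrExcess, ccrStar_robustLoss hγ hA hη.2]
  linarith [ccr_robustLoss_le_one (γ := γ) (α := α) hη]

theorem mul_le_of_ccrExcess_robustLoss_pos (hγ : 0 ≤ γ)
    (hA : (A ∩ Ioi γ).Nonempty ∧ (A ∩ Iio (-γ)).Nonempty) (hη : η ≤ 1)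
    (h : 0 < ccrExcess (robustLoss γ) A α η) :
    (2 * η - 1) * α ≤ γ * |2 * η - 1| := by
  rw [ccrExcess, ccrStar_robustLoss hγ hA hη] at h
  rcases le_total 0 (2 * η - 1) with hs | hs
  · have hα : α ≤ γ := by
      by_contra! hα
      rw [ccr_robustLoss_of_lt hγ hα, min_eq_right (by linarith), sub_self] at h
      exact h.false
    rw [abs_of_nonneg hs, mul_comm γ]
    exact mul_le_mul_of_nonneg_left hα hs
  · have hα : -γ ≤ α := by
      by_contra! hα
      rw [ccr_robustLoss_of_lt_neg hγ hα, min_eq_left (by linarith), sub_self] at h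
      exact h.false
    rw [abs_of_nonpos hs, mul_neg, ← neg_mul, mul_comm (-γ)]
    exact mul_le_mul_of_nonpos_left hα hs

theorem le_ccrExcess_robustLoss_self (hγ : 0 ≤ γ)
    (hA : (A ∩ Ioi γ).Nonempty ∧ (A ∩ Iio (-γ)).Nonempty) (hη : η ≤ 1) :
    η ≤ ccrExcess (robustLoss γ) A γ η := by
  rw [ccrExcess, ccrStar_robustLoss hγ hA hη, ccr_robustLoss_of_abs_le (abs_of_nonneg hγ).le]
  linarith [min_le_right η (1 - η)]

end RobustLoss

section Calibration

variable {γ r β α η ε : ℝ}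

theorem mem_Icc_neg_of_mem_Ico (hγ : γ ∈ Ico 0 r) : γ ∈ Icc (-r) r :=
  ⟨by linarith [hγ.1, hγ.2], hγ.2.le⟩

theorem Icc_inter_Ioi_and_Iio_nonempty (hγ : γ ∈ Ico 0 r) :
    (Icc (-r) r ∩ Ioi γ).Nonempty ∧ (Icc (-r) r ∩ Iio (-γ)).Nonempty := by
  have hr : -r ≤ r := neg_le_self (hγ.1.trans hγ.2.le)
  exact ⟨⟨r, right_mem_Icc.2 hr, hγ.2⟩, ⟨-r, left_mem_Icc.2 hr, neg_lt_neg hγ.2⟩⟩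

theorem le_ccrExcess_shiftedHinge (hγ : γ ∈ Ico 0 r) (hr : r ≤ 1 + β) (hη : η ∈ Icc (0 : ℝ) 1)
    (hα : α ∈ Icc (-r) r) (h : ε ≤ ccrExcess (robustLoss γ) (Icc (-r) r) α η) :
    (r - γ) * max 0 (2 * ε - 1) ≤ ccrExcess (shiftedHinge β) (Icc (-r) r) α η := by
  have hA := Icc_inter_Ioi_and_Iio_nonempty hγ
  rw [ccrExcess_shiftedHinge hr hα]
  rcases le_total (2 * ε - 1) 0 with hε | hε
  · rw [max_eq_left hε, mul_zero]
    exact sub_nonneg.2 (mul_le_mul_abs_of_mem_Icc hα _)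
  · have hmargin : (2 * η - 1) * α ≤ γ * |2 * η - 1| :=
      mul_le_of_ccrExcess_robustLoss_pos hγ.1 hA hη.2 (by linarith)
    have hslope : 2 * ε - 1 ≤ |2 * η - 1| := by
      linarith [two_mul_ccrExcess_robustLoss_le (α := α) hγ.1 hA hη]
    calc
      (r - γ) * max 0 (2 * ε - 1) = (r - γ) * (2 * ε - 1) := by rw [max_eq_right hε]
      _ ≤ (r - γ) * |2 * η - 1| := mul_le_mul_of_nonneg_left hslope (sub_nonneg.2 hγ.2.le)
      _ ≤ r * |2 * η - 1| - (2 * η - 1) * α := by linarith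

theorem calibrationFun_shiftedHinge_robustLoss (hγ : γ ∈ Ico 0 r) (hr : r ≤ 1 + β) (hε : ε ≤ 1) :
    calibrationFun (shiftedHinge β) (robustLoss γ) (Icc (-r) r) ε =
      (r - γ) * max 0 (2 * ε - 1) := by
  refine IsLeast.csInf_eq ⟨?_, ?_⟩
  · have hγ_mem := mem_Icc_neg_of_mem_Ico hγ
    have hη : max (1 / 2) ε ≤ 1 := max_le (by norm_num) hε
    have hs : 2 * max (1 / 2) ε - 1 = max 0 (2 * ε - 1) := by
      rw [mul_max_of_nonneg _ _ zero_le_two, ← max_sub_sub_right]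
      norm_num
    have hrobust : max (1 / 2) ε ≤ ccrExcess (robustLoss γ) (Icc (-r) r) γ (max (1 / 2) ε) :=
      le_ccrExcess_robustLoss_self hγ.1 (Icc_inter_Ioi_and_Iio_nonempty hγ) hη
    refine ⟨max (1 / 2) ε, ⟨by positivity, hη⟩, γ, hγ_mem, (le_max_right _ _).trans hrobust, ?_⟩
    rw [ccrExcess_shiftedHinge hr hγ_mem, hs, abs_of_nonneg (le_max_left _ _)]
    ring
  · rintro _ ⟨η, hη, α, hα, h, rfl⟩
    exact le_ccrExcess_shiftedHinge hγ hr hη hα h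

theorem not_calibrated_shiftedHinge_robustLoss (hγ : γ ∈ Ico 0 r) (hr : r ≤ 1 + β) :
    ¬ Calibrated (shiftedHinge β) (robustLoss γ) (Icc (-r) r) := by
  intro hcal
  have hzero : calibrationFun (shiftedHinge β) (robustLoss γ) (Icc (-r) r) (1 / 2) = 0 := by
    rw [calibrationFun_shiftedHinge_robustLoss hγ hr (by norm_num)]
    norm_num
  refine (calibrationFun_pos hcal one_half_pos ?_).ne' hzero
  exact ⟨1 / 2, by norm_num, γ, mem_Icc_neg_of_mem_Ico hγ,
    le_ccrExcess_robustLoss_self hγ.1 (Icc_inter_Ioi_and_Iio_nonempty hγ) (by norm_num)⟩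

theorem hinge_calibration_function_general (hγ : γ ∈ Ico 0 r) (hr : r ≤ 1 + β) :
    (∀ ε ≤ 1 / 2, calibrationFun (shiftedHinge β) (robustLoss γ) (Icc (-r) r) ε = 0) ∧
    (∀ ε, 1 / 2 < ε → ε ≤ 1 →
      calibrationFun (shiftedHinge β) (robustLoss γ) (Icc (-r) r) ε = (r - γ) * (2 * ε - 1)) ∧
    ¬ Calibrated (shiftedHinge β) (robustLoss γ) (Icc (-r) r) := by
  refine ⟨fun ε hε => ?_, fun ε hε hε₁ => ?_, not_calibrated_shiftedHinge_robustLoss hγ hr⟩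
  · rw [calibrationFun_shiftedHinge_robustLoss hγ hr (by linarith), max_eq_left (by linarith),
      mul_zero]
  · rw [calibrationFun_shiftedHinge_robustLoss hγ hr hε₁, max_eq_right (by linarith)]

end Calibration

/-- The `(φ_γ, [-1,1])`-calibration function of the shifted hinge loss
`φ_β(α) = max{0, 1 - α + β}` equals `0` on `(0, 1/2]` and `(1-γ)(2ε-1)` on
`(1/2, 1]`; in particular the shifted hinge loss is not `(φ_γ, [-1,1])`-calibrated. -/
theorem hinge_calibration_function
    (γ : ℝ) (hγ : γ ∈ Set.Ioo (0:ℝ) 1) (β : ℝ) (hβ : 0 ≤ β) :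
    (∀ ε : ℝ, 0 < ε → ε ≤ 1/2 →
      sInf {x : ℝ | ∃ η ∈ Set.Icc (0:ℝ) 1, ∃ α ∈ Set.Icc (-1:ℝ) 1,
          ccrExcess (robustLoss γ) (Set.Icc (-1:ℝ) 1) α η ≥ ε ∧
          x = ccrExcess (fun a => max 0 (1 - a + β)) (Set.Icc (-1:ℝ) 1) α η}
        = 0) ∧
    (∀ ε : ℝ, 1/2 < ε → ε ≤ 1 →
      sInf {x : ℝ | ∃ η ∈ Set.Icc (0:ℝ) 1, ∃ α ∈ Set.Icc (-1:ℝ) 1,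
          ccrExcess (robustLoss γ) (Set.Icc (-1:ℝ) 1) α η ≥ ε ∧
          x = ccrExcess (fun a => max 0 (1 - a + β)) (Set.Icc (-1:ℝ) 1) α η}
        = (1 - γ) * (2 * ε - 1)) ∧
    ¬ Calibrated (fun a => max 0 (1 - a + β)) (robustLoss γ) (Set.Icc (-1:ℝ) 1) := by
  obtain ⟨hsmall, hlarge, hnot⟩ := hinge_calibration_function_general ⟨hγ.1.le, hγ.2⟩
    (le_add_of_nonneg_right hβ)
  exact ⟨fun ε _ => hsmall ε, hlarge, hnot⟩
end
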